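/- Let p ≥ 2 be an integer. For every real polynomial u of degree at most p, the interpolation error u − I_{p−1}u is a scalar multiple of χ_p; explicitly, if u = Σ_{i=0}^{p} a_i P_i is the Legendre expansion of u, then u − I_{p−1}u = a_p ((2p−1)/(p² − p)) χ_p. -/

import Mathlib

open Polynomial

/-- The `n`-th Legendre polynomial, given by the Rodrigues formula
`P_n(x) = 1/(2^n n!) dⁿ/dxⁿ (x² − 1)ⁿ`, normalized so that `P_n(1) = 1`. -/
noncomputable def legendre (n : ℕ) : Polynomial ℝ :=
  Polynomial.C (1 / (2 ^ n * (n.factorial : ℝ))) *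
    (⇑(Polynomial.derivative (R := ℝ)))^[n] ((Polynomial.X ^ 2 - 1) ^ n)

/-- The polynomial `χ_p(x) = P_{p−1}'(x) (x² − 1)`, whose roots are the `p`
Gauss–Lobatto nodes. -/
noncomputable def lobattoChi (p : ℕ) : Polynomial ℝ :=
  Polynomial.derivative (legendre (p - 1)) * (Polynomial.X ^ 2 - 1)


lemma gl_monic : ((X : ℝ[X]) ^ 2 - 1).Monic := by
  simpa using monic_X_pow_sub_C (1 : ℝ) (n := 2) (by norm_num)

lemma gl_natDegree : ((X : ℝ[X]) ^ 2 - 1).natDegree = 2 := by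
  simpa using natDegree_X_pow_sub_C (n := 2) (r := (1 : ℝ))

lemma gl_natDegree_pow (n : ℕ) : (((X : ℝ[X]) ^ 2 - 1) ^ n).natDegree = n + n := by
  rw [gl_monic.natDegree_pow, gl_natDegree]; omega

lemma gl_coeff (n : ℕ) : (((X : ℝ[X]) ^ 2 - 1) ^ n).coeff (n + n) = 1 := by
  have h := (gl_monic.pow n).coeff_natDegree
  rwa [gl_natDegree_pow] at h

lemma gl_iter_ne {n k : ℕ} (hk : k ≤ n) :
    (derivative (R := ℝ))^[k] ((X ^ 2 - 1) ^ n) ≠ 0 := by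
  intro h
  have h2 := congrArg (fun q => coeff q (n + n - k)) h
  simp only [coeff_iterate_derivative, coeff_zero] at h2
  rw [show n + n - k + k = n + n by omega, gl_coeff] at h2
  simp only [nsmul_eq_mul, mul_one, Nat.cast_eq_zero, Nat.descFactorial_eq_zero_iff_lt] at h2
  omega

lemma gl_root {n k : ℕ} (hk : k < n) (e : ℝ) (he : e ^ 2 = 1) :
    ((derivative (R := ℝ))^[k] ((X ^ 2 - 1) ^ n)).eval e = 0 := by
  have h1 : (X ^ 2 - 1 : ℝ[X]) ^ (n - k) ∣ (derivative (R := ℝ))^[k] ((X ^ 2 - 1) ^ n) :=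
    pow_sub_dvd_iterate_derivative_of_pow_dvd k dvd_rfl
  have h2 := eval_dvd (x := e) h1
  simp only [eval_pow, eval_sub, eval_X, eval_one, he, sub_self] at h2
  rwa [zero_pow (by omega), zero_dvd_iff] at h2

lemma gl_card {n k : ℕ} (hk : k < n) :
    k + 2 ≤ ((derivative (R := ℝ))^[k] ((X ^ 2 - 1) ^ n)).roots.toFinset.card := by
  have hsub : ∀ k < n, ({1, -1} : Finset ℝ) ⊆
      ((derivative (R := ℝ))^[k] ((X ^ 2 - 1) ^ n)).roots.toFinset := by
    intro k hk x hx
    simp only [Finset.mem_insert, Finset.mem_singleton] at hx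
    rw [Multiset.mem_toFinset, mem_roots (gl_iter_ne hk.le)]
    rcases hx with rfl | rfl <;> exact gl_root hk _ (by norm_num)
  have h2 : ({1, -1} : Finset ℝ).card = 2 := Finset.card_pair (by norm_num)
  induction k with
  | zero => simpa [h2] using Finset.card_le_card (hsub 0 hk)
  | succ k ih =>
    have ih := ih (by omega)
    have h := card_roots_toFinset_le_card_roots_derivative_sdiff_roots_succ
      ((derivative (R := ℝ))^[k] ((X ^ 2 - 1) ^ n))
    rw [← Function.iterate_succ_apply' (derivative (R := ℝ))] at h
    set A := ((derivative (R := ℝ))^[k] ((X ^ 2 - 1) ^ n)).roots.toFinset with hA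
    set B := ((derivative (R := ℝ))^[k+1] ((X ^ 2 - 1) ^ n)).roots.toFinset with hB
    have hd : Disjoint (B \ A) {1, -1} :=
      Finset.disjoint_of_subset_right (hsub k (by omega)) Finset.sdiff_disjoint
    have h3 := Finset.card_le_card (Finset.union_subset Finset.sdiff_subset (hsub (k+1) hk) :
      (B \ A) ∪ {1, -1} ⊆ B)
    rw [Finset.card_union_of_disjoint hd, h2] at h3
    omega

lemma gl_ode (n k : ℕ) :
    (X ^ 2 - 1) * (derivative (R := ℝ))^[k + 2] ((X ^ 2 - 1) ^ n)
      + 2 * ((k : ℝ[X]) + 1 - (n : ℝ[X])) * X * (derivative (R := ℝ))^[k + 1] ((X ^ 2 - 1) ^ n)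
      + ((k : ℝ[X]) + 1) * ((k : ℝ[X]) - 2 * (n : ℝ[X])) * (derivative (R := ℝ))^[k] ((X ^ 2 - 1) ^ n) = 0 := by
  have hC : (C 2 : ℝ[X]) = 2 := rfl
  induction k with
  | zero =>
    have h : (X ^ 2 - 1) * derivative ((X ^ 2 - 1 : ℝ[X]) ^ n) = 2 * (n : ℝ[X]) * X * (X ^ 2 - 1) ^ n := by
      rcases n with _ | n
      · simp
      · rw [derivative_pow]
        simp
        ring
    have h2 := congrArg derivative h
    simp only [derivative_mul, derivative_sub, derivative_X_pow, derivative_one, derivative_X,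
      derivative_natCast, derivative_ofNat] at h2
    simp only [Function.iterate_succ_apply', Function.iterate_zero, id]
    simp at h2 ⊢
    rw [hC] at h2
    linear_combination h2
  | succ k ih =>
    have h2 := congrArg derivative ih
    simp only [derivative_mul, derivative_add, derivative_sub, derivative_X_pow, derivative_one,
      derivative_X, derivative_natCast, derivative_ofNat, derivative_zero,
      ← Function.iterate_succ_apply' (derivative (R := ℝ))] at h2
    simp at h2
    push_cast
    simp only [Function.iterate_succ_apply, Function.iterate_succ_apply'] at h2 ⊢
    rw [hC] at h2
    linear_combination h2

lemma gl_chi (m : ℕ) : lobattoChi (m + 2) =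
    C (1 / (2 ^ (m+1) * ((m+1).factorial : ℝ))) * (((m : ℝ[X]) + 1) * ((m : ℝ[X]) + 2) *
      (derivative (R := ℝ))^[m] ((X ^ 2 - 1) ^ (m + 1))) := by
  have h := gl_ode (m + 1) m
  rw [lobattoChi, show m + 2 - 1 = m + 1 from rfl, legendre, derivative_C_mul,
    ← Function.iterate_succ_apply' (derivative (R := ℝ))]
  push_cast at h
  linear_combination C (1 / (2 ^ (m+1) * ((m+1).factorial : ℝ))) * h

lemma gl_leg_deg (n : ℕ) : (legendre n).natDegree ≤ n := by
  refine (natDegree_C_mul_le _ _).trans ((natDegree_iterate_derivative _ _).trans ?_)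
  rw [gl_natDegree_pow]; omega

lemma gl_leg_coeff (n : ℕ) : (legendre n).coeff n * (2 ^ n * n.factorial * n.factorial)
    = ((n + n).factorial : ℝ) := by
  have h := Nat.factorial_mul_descFactorial (show n ≤ n + n by omega)
  rw [Nat.add_sub_cancel] at h
  rw [legendre, coeff_C_mul, coeff_iterate_derivative, gl_coeff, ← h]
  have := n.factorial_ne_zero
  simp
  field_simp

lemma gl_leg_succ (n : ℕ) : (legendre (n+1)).coeff (n+1) * (n + 1)
    = (2 * n + 1) * (legendre n).coeff n := by
  have h1 := gl_leg_coeff n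
  have h2 := gl_leg_coeff (n+1)
  rw [show n + 1 + (n + 1) = n + n + 1 + 1 by ring, Nat.factorial_succ (n+n+1),
    Nat.factorial_succ (n+n), Nat.factorial_succ n] at h2
  push_cast at h2
  rw [← h1] at h2
  have h3 : (2 ^ n * n.factorial * n.factorial * (2 * (n + 1)) : ℝ) ≠ 0 := by positivity
  apply mul_right_cancel₀ h3
  rw [pow_succ] at h2
  linear_combination h2

lemma gl_deg_lt {q : ℝ[X]} {m : ℕ} (h : q.natDegree ≤ m + 2) (h0 : q.coeff (m + 2) = 0) :
    q.natDegree < m + 2 := by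
  refine lt_of_le_of_ne h fun heq => ?_
  have h1 : q.leadingCoeff = 0 := by rw [leadingCoeff, heq, h0]
  rw [leadingCoeff_eq_zero.mp h1] at heq
  simp at heq

lemma gl_chi_deg (m : ℕ) : (lobattoChi (m + 2)).natDegree ≤ m + 2 := by
  rw [lobattoChi]
  refine natDegree_mul_le.trans ?_
  rw [gl_natDegree]
  have h1 := natDegree_derivative_le (legendre (m + 2 - 1))
  have h2 := gl_leg_deg (m + 2 - 1)
  omega

lemma gl_chi_coeff (m : ℕ) : (lobattoChi (m + 2)).coeff (m + 2) =
    (m + 1) * (legendre (m + 1)).coeff (m + 1) := by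
  have h0 : (derivative (legendre (m + 1))).coeff (m + 2) = 0 := by
    rw [coeff_derivative, coeff_eq_zero_of_natDegree_lt, zero_mul]
    have := gl_leg_deg (m + 1)
    omega
  rw [lobattoChi, show m + 2 - 1 = m + 1 from rfl, mul_sub, mul_one, coeff_sub, h0,
    coeff_mul_X_pow, coeff_derivative]
  ring

/-- The Gauss–Lobatto interpolation error is a multiple of `χ_p`: if
`u = Σ_{i=0}^{p} a_i P_i` is the Legendre expansion of a polynomial of degree at
most `p`, and `v = I_{p−1}u` is the polynomial of degree at most `p − 1` agreeing
with `u` at the `p` Gauss–Lobatto nodes (the roots of `χ_p`), then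
`u − v = a_p ((2p−1)/(p² − p)) χ_p`. -/
theorem gauss_lobatto_interp_error_eq (p : ℕ) (hp : 2 ≤ p)
    (a : ℕ → ℝ) (u v : Polynomial ℝ)
    (hu : u = ∑ i ∈ Finset.range (p + 1), Polynomial.C (a i) * legendre i)
    (hv : v.natDegree ≤ p - 1)
    (hinterp : ∀ x : ℝ, (lobattoChi p).eval x = 0 → v.eval x = u.eval x) :
    u - v = Polynomial.C (a p * ((2 * (p : ℝ) - 1) / ((p : ℝ) ^ 2 - p))) * lobattoChi p := by

  obtain ⟨m, rfl⟩ : ∃ m, p = m + 2 := ⟨p - 2, by omega⟩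
  rw [← sub_eq_zero]
  set c : ℝ := a (m + 2) * ((2 * ((m + 2 : ℕ) : ℝ) - 1) / (((m + 2 : ℕ) : ℝ) ^ 2 - (m + 2 : ℕ)))
    with hc
  set S := ((derivative (R := ℝ))^[m] ((X ^ 2 - 1) ^ (m + 1))).roots.toFinset with hS
  have hcard : m + 2 ≤ S.card := gl_card (by omega)
  have hudeg : u.natDegree ≤ m + 2 := by
    rw [hu]
    apply natDegree_sum_le_of_forall_le
    intro i hi
    have := Finset.mem_range.mp hi
    exact (natDegree_C_mul_le _ _).trans ((gl_leg_deg i).trans (show i ≤ m + 2 by omega))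
  have hucoeff : u.coeff (m + 2) = a (m + 2) * (legendre (m + 2)).coeff (m + 2) := by
    rw [hu, finsetSum_coeff, Finset.sum_range_succ, Finset.sum_eq_zero, zero_add, coeff_C_mul]
    intro i hi
    have h1 := Finset.mem_range.mp hi
    have h2 := gl_leg_deg i
    rw [coeff_C_mul, coeff_eq_zero_of_natDegree_lt (by omega), mul_zero]
  have hvcoeff : v.coeff (m + 2) = 0 := coeff_eq_zero_of_natDegree_lt (by omega)
  have hwdeg : (u - v - C c * lobattoChi (m + 2)).natDegree ≤ m + 2 :=
    natDegree_sub_le_of_le (natDegree_sub_le_of_le hudeg (show v.natDegree ≤ m + 2 by omega))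
      ((natDegree_C_mul_le _ _).trans (gl_chi_deg m)) |>.trans (by simp)
  have hwcoeff : (u - v - C c * lobattoChi (m + 2)).coeff (m + 2) = 0 := by
    have h := gl_leg_succ (m + 1)
    rw [coeff_sub, coeff_sub, coeff_C_mul, hucoeff, hvcoeff, gl_chi_coeff, hc]
    push_cast at h ⊢
    have h1 : ((m : ℝ) + 2) ^ 2 - (m + 2) = (m + 1) * (m + 2) := by ring
    rw [h1]
    have h2 : (m : ℝ) + 1 ≠ 0 := by positivity
    have h3 : (m : ℝ) + 2 ≠ 0 := by positivity
    field_simp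
    linear_combination (a (m + 2)) * h
  have hwdeg' : (u - v - C c * lobattoChi (m + 2)).natDegree < S.card := by
    refine lt_of_lt_of_le ?_ hcard
    exact gl_deg_lt hwdeg hwcoeff
  refine eq_zero_of_natDegree_lt_card_of_eval_eq_zero' _ S ?_ hwdeg'
  intro x hx
  rw [hS, Multiset.mem_toFinset, mem_roots (gl_iter_ne (by omega))] at hx
  have hchi : (lobattoChi (m + 2)).eval x = 0 := by
    rw [gl_chi]
    simp only [eval_mul, hx.eq_zero, mul_zero]
  rw [eval_sub, eval_sub, eval_mul, hchi, hinterp x hchi]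
  ring
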